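/- Let μ be a continuous linear form on C^r(𝒪_F,J',(d_σ)_{σ∈S∖J'}). Then there exists a constant C_μ ∈ ℝ_{≥0} such that for every a ∈ 𝒪_F, every n ∈ ℤ_{≥0} and every multi-index i ∈ Y' one has |μ( z ↦ 1_{a+ϖ_F^n𝒪_F}(z)·((z−a)/ϖ_F^n)^i )| ≤ C_μ · q^{nr}. -/

import Mathlib

/-!
Setting (cf. the paper's notations): `O` plays the role of the ring of integers `𝒪_F` of a
finite extension `F` of `ℚ_p`, `E` is the coefficient field (a finite extension of `ℚ_p`
with its p-adic absolute value, normalized by `|x| = p^{-val_F(x)}`, `val_F(p) = [F:ℚ_p]`),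
`S` is the (finite) set of `ℚ_p`-algebra embeddings `F ↪ E`, restricted here to `O`,
`ν : O → ℝ` is the absolute value on `O` (the common restriction of the norm of `E` along any
embedding), `ϖ` is a fixed uniformizer with `ν ϖ = q⁻¹` where `q = p^f` is the cardinality
of the residue field, and `u * ϖ ^ e = p` records the ramification index `e`.
-/

open scoped Classical

noncomputable section

namespace CrPaper

structure Setting (S O E : Type*) [Fintype S] [CommRing O] [NormedField E] where
  q : ℝ
  p : ℕ
  fdeg : ℕ
  hp : p.Prime
  hfdeg : 0 < fdeg
  hq : q = (p : ℝ) ^ fdeg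
  emb : S → O →+* E
  emb_inj : ∀ s, Function.Injective (emb s)
  emb_distinct : Function.Injective emb
  ν : O → ℝ
  norm_emb : ∀ (s) (z : O), ‖emb s z‖ = ν z
  norm_le_one : ∀ (s) (z : O), ‖emb s z‖ ≤ 1
  norm_add_max : ∀ x y : E, ‖x + y‖ ≤ max ‖x‖ ‖y‖
  ϖ : O
  ν_ϖ : ν ϖ = q⁻¹
  mem_ball_iff : ∀ (y : O) (n : ℕ), (∃ z, y = ϖ ^ n * z) ↔ ν y ≤ q⁻¹ ^ n
  ram : ∃ (e : ℕ) (u : O), 0 < e ∧ IsUnit u ∧ u * ϖ ^ e = (p : O)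

variable {S O E : Type*} [Fintype S] [DecidableEq S] [CommRing O] [IsDomain O]
  [NormedField E] [CompleteSpace E] [CharZero E]

/-- The total weight `|i| = ∑ i_σ` of a multi-index. -/
def wt (i : S → ℕ) : ℕ := ∑ s, i s

/-- `i! = ∏ i_σ!` for a multi-index. -/
def mfact (i : S → ℕ) : ℕ := ∏ s, (i s).factorial

/-- The (finite) set `I_{≤N}` of multi-indices of total weight `≤ N`. -/
def Idx (S : Type*) [Fintype S] [DecidableEq S] (N : ℕ) : Finset (S → ℕ) :=
  (Fintype.piFinset fun _ : S => Finset.range (N + 1)).filter fun i => wt i ≤ N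

/-- `z^i = ∏_σ σ(z)^{i_σ}`. -/
def mpow (St : Setting S O E) (z : O) (i : S → ℕ) : E := ∏ s, St.emb s z ^ i s

/-- The Taylor remainder `ε_{f,N}(x,y) = f(x+y) − ∑_{|i|≤N} D_i f(x) y^i / i!`. -/
def epsTay (St : Setting S O E) (N : ℕ) (f : O → E) (D : (S → ℕ) → O → E) (x y : O) : E :=
  f (x + y) - ∑ i ∈ Idx S N, D i x * mpow St y i / (mfact i : E)

/-- `f` is of class `C^r` with the family of bounded functions `D` witnessing the
definition: all `D_i` (`|i| ≤ ⌊r⌋`) are bounded and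
`C_{f,r}(h) = sup_{x ∈ O, y ∈ ϖ^h O} |ε_{f,⌊r⌋}(x,y)| q^{rh} → 0` as `h → ∞`. -/
def IsCrWith (St : Setting S O E) (r : ℝ) (f : O → E) (D : (S → ℕ) → O → E) : Prop :=
  (∀ i ∈ Idx S ⌊r⌋₊, ∃ C : ℝ, ∀ x : O, ‖D i x‖ ≤ C) ∧
  ∀ ε : ℝ, 0 < ε → ∃ M : ℕ, ∀ h : ℕ, M ≤ h → ∀ x z : O,
    ‖epsTay St ⌊r⌋₊ f D x (St.ϖ ^ h * z)‖ * St.q ^ (r * (h : ℝ)) ≤ ε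

/-- `f` is of class `C^r`. -/
def IsCr (St : Setting S O E) (r : ℝ) (f : O → E) : Prop :=
  ∃ D, IsCrWith St r f D

/-- The `C^r`-norm of `f` (relative to the — unique — family `D`):
`max( sup_{i,x} |D_i f(x)/i!| , sup_{x,y} |ε_{f,⌊r⌋}(x,y)|/|y|^r )`. -/
def CrNorm (St : Setting S O E) (r : ℝ) (f : O → E) (D : (S → ℕ) → O → E) : ℝ :=
  max (⨆ i : (Idx S ⌊r⌋₊), ⨆ x : O, ‖D i.1 x / (mfact i.1 : E)‖)
      (⨆ x : O, ⨆ y : O, ‖epsTay St ⌊r⌋₊ f D x y‖ / St.ν y ^ r)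

/-- The function `z ↦ 1_{a+ϖ^n O}(z) ((z−a)/ϖ^n)^i` : it takes the value `y^i` at
`z = a + ϖ^n y` and `0` outside the coset `a + ϖ^n O`. -/
def coeval (St : Setting S O E) (a : O) (n : ℕ) (i : S → ℕ) : O → E := fun z =>
  if hz : ∃ y : O, z = a + St.ϖ ^ n * y then mpow St hz.choose i else 0

/-- `J' = J ∪ {σ ∈ S∖J : d_σ + 1 > r}`. -/
def Jp (J : Set S) (d : S → ℕ) (r : ℝ) : Set S := J ∪ {s | r < (d s : ℝ) + 1}

/-!
The derivatives of a rescaled monomial `((z - a) / ϖ^n)^i` are multiples of rescaled monomials of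
lower degree on the same coset, `D_j / j! = binom(i, j) ((z - a) / ϖ^n)^(i - j) / (ϖ^n)^j`, so by
integrality of the binomial coefficients `|D_j / j!| ≤ (q^n)^|j|`. For an increment `y = ϖ^n w` the
binomial formula identifies the Taylor remainder with the terms of weight `|j| > ⌊r⌋`, of norm at
most `|w|^|j| ≤ |w|^r = (q^n |y|)^r`. For `|y| > q^(-n)` the function values are at most `1` and the
Taylor terms at most `(q^n |y|)^|j|` with `|j| ≤ ⌊r⌋`, hence all are at most `(q^n |y|)^r`.
Therefore the `C^r`-norm is at most `q^(nr)`.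
-/

/-- The multi-index binomial coefficient `∏_σ binom(i_σ, j_σ)`, which vanishes unless `j ≤ i`. -/
def mchoose (i j : S → ℕ) : ℕ := ∏ s, (i s).choose (j s)

/-- The `j`-th derivative of `coeval St a n i`, as a function on `O`. The difference `i - j` is
truncated at `0`, but this is harmless since `mchoose i j = 0` unless `j ≤ i`. -/
def coevalDeriv (St : Setting S O E) (a : O) (n : ℕ) (i j : S → ℕ) (x : O) : E :=
  mfact j * (mchoose i j * coeval St a n (i - j) x / mpow St (St.ϖ ^ n) j)

theorem pow_le_rpow_of_le_floor {b r : ℝ} (hb : 1 ≤ b) (hr : 0 ≤ r) {k : ℕ} (hk : k ≤ ⌊r⌋₊) :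
    b ^ k ≤ b ^ r := by
  rw [← Real.rpow_natCast]
  exact Real.rpow_le_rpow_of_exponent_le hb ((Nat.le_floor_iff hr).mp hk)

theorem pow_le_rpow_of_floor_lt {b r : ℝ} (hb₀ : 0 ≤ b) (hb₁ : b ≤ 1) (hr : 0 ≤ r) {k : ℕ}
    (hk : ⌊r⌋₊ < k) : b ^ k ≤ b ^ r := by
  rw [← Real.rpow_natCast]
  exact Real.rpow_le_rpow_of_exponent_ge' hb₀ hb₁ hr (Nat.lt_of_floor_lt hk).le

section

omit [DecidableEq S] [IsDomain O] [CompleteSpace E] [CharZero E]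

theorem mfact_ne_zero (j : S → ℕ) : mfact j ≠ 0 :=
  Finset.prod_ne_zero_iff.mpr fun s _ => (j s).factorial_ne_zero

theorem mchoose_eq_zero {i j : S → ℕ} (h : ¬ j ≤ i) : mchoose i j = 0 := by
  obtain ⟨s, hs⟩ := not_forall.mp h
  exact Finset.prod_eq_zero (Finset.mem_univ s) (Nat.choose_eq_zero_of_lt (not_le.mp hs))

namespace Setting

theorem one_lt_q (St : Setting S O E) : 1 < St.q := by
  rw [St.hq]
  exact one_lt_pow₀ (by exact_mod_cast St.hp.one_lt) St.hfdeg.ne'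

theorem q_pos (St : Setting S O E) : 0 < St.q := zero_lt_one.trans St.one_lt_q

theorem isUltrametricDist (St : Setting S O E) : IsUltrametricDist E :=
  IsUltrametricDist.isUltrametricDist_of_forall_norm_add_le_max_norm St.norm_add_max

theorem ν_nonneg [Nonempty S] (St : Setting S O E) (y : O) : 0 ≤ St.ν y :=
  St.norm_emb (Classical.arbitrary S) y ▸ norm_nonneg _

theorem ν_le_one [Nonempty S] (St : Setting S O E) (y : O) : St.ν y ≤ 1 :=
  St.norm_emb (Classical.arbitrary S) y ▸ St.norm_le_one _ y

theorem q_pow_mul_ν_ϖ_pow_mul [Nonempty S] (St : Setting S O E) (n : ℕ) (w : O) :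
    St.q ^ n * St.ν (St.ϖ ^ n * w) = St.ν w := by
  have hq := St.q_pos
  simp only [← St.norm_emb (Classical.arbitrary S), map_mul, map_pow, norm_mul, norm_pow]
  rw [St.norm_emb _ St.ϖ, St.ν_ϖ, inv_pow, mul_inv_cancel_left₀ (by positivity)]

end Setting

theorem norm_mpow (St : Setting S O E) (y : O) (j : S → ℕ) : ‖mpow St y j‖ = St.ν y ^ wt j := by
  simp only [mpow, wt, norm_prod, norm_pow, St.norm_emb, Finset.prod_pow_eq_pow_sum]

theorem norm_mpow_le_one (St : Setting S O E) (y : O) (j : S → ℕ) : ‖mpow St y j‖ ≤ 1 := by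
  simp only [mpow, norm_prod, norm_pow]
  exact Finset.prod_le_one (fun _ _ => by positivity) fun s _ =>
    pow_le_one₀ (norm_nonneg _) (St.norm_le_one s y)

theorem mpow_mul (St : Setting S O E) (x y : O) (j : S → ℕ) :
    mpow St (x * y) j = mpow St x j * mpow St y j := by
  simp only [mpow, map_mul, mul_pow, Finset.prod_mul_distrib]

theorem norm_mpow_ϖ_pow (St : Setting S O E) (n : ℕ) (j : S → ℕ) :
    ‖mpow St (St.ϖ ^ n) j‖ = (St.q ^ n)⁻¹ ^ wt j := by
  simp only [mpow, wt, norm_prod, norm_pow, map_pow, St.norm_emb, St.ν_ϖ, ← inv_pow,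
    Finset.prod_pow_eq_pow_sum]

theorem mpow_ϖ_pow_ne_zero (St : Setting S O E) (n : ℕ) (j : S → ℕ) :
    mpow St (St.ϖ ^ n) j ≠ 0 := by
  have hq := St.q_pos
  rw [← norm_ne_zero_iff, norm_mpow_ϖ_pow]
  positivity

theorem coeval_add_ϖ_pow_mul (St : Setting S O E) (a : O) (n : ℕ) (i : S → ℕ) (v : O) :
    coeval St a n i (a + St.ϖ ^ n * v) = mpow St v i := by
  have hz : ∃ y : O, a + St.ϖ ^ n * v = a + St.ϖ ^ n * y := ⟨v, rfl⟩
  rw [coeval, dif_pos hz]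
  apply mul_left_cancel₀ (mpow_ϖ_pow_ne_zero St n i)
  rw [← mpow_mul, ← mpow_mul]
  exact congrArg (mpow St · i) (add_left_cancel hz.choose_spec).symm

theorem coeval_of_not_exists (St : Setting S O E) {a : O} {n : ℕ} (i : S → ℕ) {x : O}
    (hx : ¬ ∃ v, x = a + St.ϖ ^ n * v) : coeval St a n i x = 0 :=
  dif_neg hx

theorem norm_coeval_le_one (St : Setting S O E) (a : O) (n : ℕ) (i : S → ℕ) (x : O) :
    ‖coeval St a n i x‖ ≤ 1 := by
  by_cases hx : ∃ v, x = a + St.ϖ ^ n * v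
  · obtain ⟨v, rfl⟩ := hx
    rw [coeval_add_ϖ_pow_mul]
    exact norm_mpow_le_one St v i
  · rw [coeval_of_not_exists St i hx, norm_zero]
    exact zero_le_one

theorem norm_mchoose_mul_coeval_le_one (St : Setting S O E) (a : O) (n : ℕ) (i j : S → ℕ) (x : O) :
    ‖(mchoose i j : E) * coeval St a n (i - j) x‖ ≤ 1 := by
  have := St.isUltrametricDist
  rw [norm_mul]
  exact mul_le_one₀ (IsUltrametricDist.norm_natCast_le_one E _) (norm_nonneg _)
    (norm_coeval_le_one St a n _ x)

theorem coevalDeriv_eq_zero (St : Setting S O E) (a : O) (n : ℕ) {i j : S → ℕ} (h : ¬ j ≤ i) :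
    coevalDeriv St a n i j = 0 := by
  funext x
  simp [coevalDeriv, mchoose_eq_zero h]

end

section

omit [IsDomain O] [CompleteSpace E] [CharZero E]

theorem mem_Idx {N : ℕ} {j : S → ℕ} : j ∈ Idx S N ↔ wt j ≤ N := by
  simp only [Idx, Finset.mem_filter, Fintype.mem_piFinset, Finset.mem_range, Nat.lt_succ_iff,
    and_iff_right_iff_imp]
  exact fun h s => (Finset.single_le_sum_of_canonicallyOrdered (Finset.mem_univ s)).trans h

theorem prod_add_pow {R : Type*} [CommSemiring R] (x y : S → R) (i : S → ℕ) :
    ∏ s, (x s + y s) ^ i s =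
      ∑ j ∈ Finset.Iic i, mchoose i j * (∏ s, x s ^ (i - j) s) * ∏ s, y s ^ j s := by
  calc ∏ s, (x s + y s) ^ i s
      = ∏ s, ∑ k ∈ Finset.Iic (i s), (i s).choose k * x s ^ (i s - k) * y s ^ k :=
        Finset.prod_congr rfl fun s _ => by
          rw [add_comm, add_pow, Nat.range_succ_eq_Iic]
          exact Finset.sum_congr rfl fun k _ => by ring
    _ = ∑ j ∈ Finset.Iic i, ∏ s, ((i s).choose (j s) * x s ^ (i s - j s) * y s ^ j s) :=
        Finset.prod_univ_sum _ _
    _ = _ := by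
        simp only [mchoose, Nat.cast_prod, Finset.prod_mul_distrib, Pi.sub_apply]

theorem mpow_add (St : Setting S O E) (v w : O) (i : S → ℕ) :
    mpow St (v + w) i = ∑ j ∈ Finset.Iic i, mchoose i j * mpow St v (i - j) * mpow St w j := by
  simp only [mpow, map_add, prod_add_pow]

theorem coeval_add (St : Setting S O E) (a : O) (n : ℕ) (i : S → ℕ) (x w : O) :
    coeval St a n i (x + St.ϖ ^ n * w) =
      ∑ j ∈ Finset.Iic i, mchoose i j * coeval St a n (i - j) x * mpow St w j := by
  by_cases hx : ∃ v, x = a + St.ϖ ^ n * v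
  · obtain ⟨v, rfl⟩ := hx
    simp only [add_assoc, ← mul_add, coeval_add_ϖ_pow_mul, mpow_add]
  · have hxw : ¬ ∃ v, x + St.ϖ ^ n * w = a + St.ϖ ^ n * v := by
      rintro ⟨v, hv⟩
      exact hx ⟨v - w, by linear_combination hv⟩
    simp only [coeval_of_not_exists St _ hx, coeval_of_not_exists St _ hxw, mul_zero, zero_mul,
      Finset.sum_const_zero]

end

section

omit [DecidableEq S] [IsDomain O] [CompleteSpace E]

theorem coevalDeriv_div_mfact (St : Setting S O E) (a : O) (n : ℕ) (i j : S → ℕ) (x : O) :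
    coevalDeriv St a n i j x / mfact j =
      mchoose i j * coeval St a n (i - j) x / mpow St (St.ϖ ^ n) j :=
  mul_div_cancel_left₀ _ (Nat.cast_ne_zero.mpr (mfact_ne_zero j))

theorem norm_coevalDeriv_div_mfact_le (St : Setting S O E) (a : O) (n : ℕ) (i j : S → ℕ) (x : O) :
    ‖coevalDeriv St a n i j x / mfact j‖ ≤ (St.q ^ n) ^ wt j := by
  have hq := St.q_pos
  rw [coevalDeriv_div_mfact, norm_div, norm_mpow_ϖ_pow, inv_pow, div_inv_eq_mul]
  exact mul_le_of_le_one_left (by positivity) (norm_mchoose_mul_coeval_le_one St a n i j x)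

end

section

omit [IsDomain O] [CompleteSpace E]

theorem epsTay_coeval_ϖ_pow_mul (St : Setting S O E) (N : ℕ) (a : O) (n : ℕ) (i : S → ℕ)
    (x w : O) :
    epsTay St N (coeval St a n i) (coevalDeriv St a n i) x (St.ϖ ^ n * w) =
      ∑ j ∈ Finset.Iic i with N < wt j,
        mchoose i j * coeval St a n (i - j) x * mpow St w j := by
  set summand : (S → ℕ) → E := fun j => mchoose i j * coeval St a n (i - j) x * mpow St w j
  have hsummand (j : S → ℕ) :
      coevalDeriv St a n i j x * mpow St (St.ϖ ^ n * w) j / mfact j = summand j := by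
    rw [mul_div_right_comm, coevalDeriv_div_mfact, mpow_mul, ← mul_assoc,
      div_mul_cancel₀ _ (mpow_ϖ_pow_ne_zero St n j)]
  have htaylor : ∑ j ∈ Idx S N, summand j = ∑ j ∈ Finset.Iic i with wt j ≤ N, summand j := by
    refine (Finset.sum_subset (fun j hj => mem_Idx.mpr (Finset.mem_filter.mp hj).2) ?_).symm
    intro j hj hj'
    have hji : ¬ j ≤ i := fun h =>
      hj' (Finset.mem_filter.mpr ⟨Finset.mem_Iic.mpr h, mem_Idx.mp hj⟩)
    simp [summand, mchoose_eq_zero hji]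
  rw [epsTay, coeval_add, Finset.sum_congr rfl fun j _ => hsummand j, htaylor,
    ← Finset.sum_filter_add_sum_filter_not (Finset.Iic i) (fun j => wt j ≤ N),
    add_sub_cancel_left]
  simp only [not_le, summand]

theorem norm_epsTay_coeval_ϖ_pow_mul_le (St : Setting S O E) {N : ℕ} (a : O) (n : ℕ) (i : S → ℕ)
    (x w : O) {B : ℝ} (hB : 0 ≤ B) (h : ∀ j : S → ℕ, N < wt j → ‖mpow St w j‖ ≤ B) :
    ‖epsTay St N (coeval St a n i) (coevalDeriv St a n i) x (St.ϖ ^ n * w)‖ ≤ B := by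
  have := St.isUltrametricDist
  rw [epsTay_coeval_ϖ_pow_mul]
  refine IsUltrametricDist.norm_sum_le_of_forall_le_of_nonneg hB fun j hj => ?_
  rw [norm_mul]
  exact (mul_le_of_le_one_left (norm_nonneg _) (norm_mchoose_mul_coeval_le_one St a n i j x)).trans
    (h j (Finset.mem_filter.mp hj).2)

theorem norm_epsTay_coeval_le_pow (St : Setting S O E) (N : ℕ) (a : O) {n h : ℕ} (hnh : n ≤ h)
    (i : S → ℕ) (x z : O) :
    ‖epsTay St N (coeval St a n i) (coevalDeriv St a n i) x (St.ϖ ^ h * z)‖ ≤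
      (St.q ^ n / St.q ^ h) ^ (N + 1) := by
  have hq := St.q_pos
  obtain ⟨k, rfl⟩ := Nat.exists_eq_add_of_le hnh
  have hquot : St.q ^ n / St.q ^ (n + k) = (St.q ^ k)⁻¹ := by
    rw [pow_add, div_mul_cancel_left₀ (by positivity)]
  rw [hquot, pow_add, mul_assoc]
  refine norm_epsTay_coeval_ϖ_pow_mul_le St a n i x _ (by positivity) fun j hj => ?_
  calc ‖mpow St (St.ϖ ^ k * z) j‖
      = (St.q ^ k)⁻¹ ^ wt j * ‖mpow St z j‖ := by rw [mpow_mul, norm_mul, norm_mpow_ϖ_pow]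
    _ ≤ (St.q ^ k)⁻¹ ^ wt j := mul_le_of_le_one_right (by positivity) (norm_mpow_le_one St z j)
    _ ≤ (St.q ^ k)⁻¹ ^ (N + 1) := pow_le_pow_of_le_one (by positivity)
        (inv_le_one_of_one_le₀ (one_le_pow₀ St.one_lt_q.le)) hj

theorem isCrWith_coeval (St : Setting S O E) (r : ℝ) (a : O) (n : ℕ) (i : S → ℕ) :
    IsCrWith St r (coeval St a n i) (coevalDeriv St a n i) := by
  have hq := St.q_pos
  refine ⟨fun j _ => ⟨‖(mfact j : E)‖ * (St.q ^ n) ^ wt j, fun x => ?_⟩, fun ε hε => ?_⟩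
  · rw [← mul_div_cancel₀ (coevalDeriv St a n i j x) (Nat.cast_ne_zero.mpr (mfact_ne_zero j)),
      norm_mul]
    gcongr
    exact norm_coevalDeriv_div_mfact_le St a n i j x
  · set N := ⌊r⌋₊
    have hratio : St.q ^ r / St.q ^ (N + 1) < 1 := by
      rw [div_lt_one (by positivity), ← Real.rpow_natCast]
      exact Real.rpow_lt_rpow_of_exponent_lt St.one_lt_q (by exact_mod_cast Nat.lt_floor_add_one r)
    have hlim : Filter.Tendsto (fun h : ℕ => (St.q ^ n) ^ (N + 1) * (St.q ^ r / St.q ^ (N + 1)) ^ h)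
        Filter.atTop (nhds 0) := by
      simpa only [mul_zero] using
        (tendsto_pow_atTop_nhds_zero_of_lt_one (by positivity) hratio).const_mul _
    obtain ⟨M, hM⟩ := Filter.eventually_atTop.mp (hlim.eventually_le_const hε)
    refine ⟨max M n, fun h hh x z => ?_⟩
    calc _ ≤ (St.q ^ n / St.q ^ h) ^ (N + 1) * St.q ^ (r * h) := by
          gcongr
          exact norm_epsTay_coeval_le_pow St N a (le_of_max_le_right hh) i x z
      _ = (St.q ^ n) ^ (N + 1) * (St.q ^ r / St.q ^ (N + 1)) ^ h := by
          rw [Real.rpow_mul_natCast hq.le, div_pow, div_pow, pow_right_comm St.q h]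
          ring
      _ ≤ ε := hM h (le_of_max_le_left hh)

theorem norm_epsTay_coeval_le_rpow (St : Setting S O E) {r : ℝ} (hr : 0 ≤ r) (a : O) (n : ℕ)
    (i : S → ℕ) (x : O) {y : O} (hy : 1 ≤ St.q ^ n * St.ν y) :
    ‖epsTay St ⌊r⌋₊ (coeval St a n i) (coevalDeriv St a n i) x y‖ ≤ (St.q ^ n * St.ν y) ^ r := by
  have := St.isUltrametricDist
  have hq := St.q_pos
  have hν : 0 ≤ St.ν y := nonneg_of_mul_nonneg_right (zero_le_one.trans hy) (by positivity)
  rw [epsTay, sub_eq_add_neg]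
  refine (St.norm_add_max _ _).trans (max_le ?_ ((norm_neg _).trans_le ?_))
  · exact (norm_coeval_le_one St a n i _).trans (Real.one_le_rpow hy hr)
  · refine IsUltrametricDist.norm_sum_le_of_forall_le_of_nonneg (by positivity) fun j hj => ?_
    calc ‖coevalDeriv St a n i j x * mpow St y j / mfact j‖
        = ‖coevalDeriv St a n i j x / mfact j‖ * St.ν y ^ wt j := by
          rw [mul_div_right_comm, norm_mul, norm_mpow]
      _ ≤ (St.q ^ n) ^ wt j * St.ν y ^ wt j := by
          gcongr
          exact norm_coevalDeriv_div_mfact_le St a n i j x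
      _ = (St.q ^ n * St.ν y) ^ wt j := (mul_pow _ _ _).symm
      _ ≤ (St.q ^ n * St.ν y) ^ r := pow_le_rpow_of_le_floor hy hr (mem_Idx.mp hj)

theorem norm_epsTay_coeval_div_le (St : Setting S O E) {r : ℝ} (hr : 0 ≤ r) (a : O) (n : ℕ)
    (i : S → ℕ) (x y : O) :
    ‖epsTay St ⌊r⌋₊ (coeval St a n i) (coevalDeriv St a n i) x y‖ / St.ν y ^ r ≤
      (St.q ^ n) ^ r := by
  have hq := St.q_pos
  by_cases hy : ∃ w, y = St.ϖ ^ n * w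
  · obtain ⟨w, rfl⟩ := hy
    rcases isEmpty_or_nonempty S with hS | hS
    · -- `ν` is unconstrained when there is no embedding, but then the remainder vanishes.
      have hε := norm_epsTay_coeval_ϖ_pow_mul_le (N := ⌊r⌋₊) St a n i x w le_rfl fun j hj =>
        absurd hj (by simp [wt])
      rw [hε.antisymm (norm_nonneg _), zero_div]
      positivity
    · have hν := St.ν_nonneg (St.ϖ ^ n * w)
      have hw := St.ν_nonneg w
      refine div_le_of_le_mul₀ (by positivity) (by positivity) ?_
      rw [← Real.mul_rpow (by positivity) hν, St.q_pow_mul_ν_ϖ_pow_mul]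
      refine norm_epsTay_coeval_ϖ_pow_mul_le St a n i x w (by positivity) fun j hj => ?_
      rw [norm_mpow]
      exact pow_le_rpow_of_floor_lt hw (St.ν_le_one w) hr hj
  · rw [St.mem_ball_iff, not_le, inv_pow] at hy
    have hν : 0 < St.ν y := lt_trans (by positivity) hy
    rw [div_le_iff₀ (by positivity), ← Real.mul_rpow (by positivity) hν.le]
    exact norm_epsTay_coeval_le_rpow St hr a n i x
      ((inv_lt_iff_one_lt_mul₀' (by positivity)).mp hy).le

theorem CrNorm_coeval_le (St : Setting S O E) {r : ℝ} (hr : 0 ≤ r) (a : O) (n : ℕ) (i : S → ℕ) :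
    CrNorm St r (coeval St a n i) (coevalDeriv St a n i) ≤ (St.q ^ n) ^ r := by
  have hq := St.q_pos
  have hB : 0 ≤ (St.q ^ n) ^ r := by positivity
  refine max_le (Real.iSup_le (fun j => Real.iSup_le (fun x => ?_) hB) hB)
    (Real.iSup_le (fun x => Real.iSup_le (norm_epsTay_coeval_div_le St hr a n i x) hB) hB)
  exact (norm_coevalDeriv_div_mfact_le St a n i j.1 x).trans
    (pow_le_rpow_of_le_floor (one_le_pow₀ St.one_lt_q.le) hr (mem_Idx.mp j.2))

theorem statement17_general {W : Type*} [Norm W] (St : Setting S O E) (J : Set S) (d : S → ℕ)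
    {r : ℝ} (hr : 0 ≤ r) (μ : (O → E) → W) {K : ℝ} (hK : 0 ≤ K)
    (hμ : ∀ (f : O → E) (D : (S → ℕ) → O → E),
      IsCrWith St r f D → (∀ s ∉ Jp J d r, D (Pi.single s (d s + 1)) = 0) →
      ‖μ f‖ ≤ K * CrNorm St r f D)
    (a : O) (n : ℕ) {i : S → ℕ} (hi : ∀ s ∉ Jp J d r, i s ≤ d s) :
    ‖μ (coeval St a n i)‖ ≤ K * St.q ^ ((n : ℝ) * r) := by
  have hderiv (s : S) (hs : s ∉ Jp J d r) :
      coevalDeriv St a n i (Pi.single s (d s + 1)) = 0 := by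
    refine coevalDeriv_eq_zero St a n fun hle => (hi s hs).not_gt ?_
    simpa only [Pi.single_eq_same, Nat.succ_le_iff] using hle s
  calc ‖μ (coeval St a n i)‖
      ≤ K * CrNorm St r (coeval St a n i) (coevalDeriv St a n i) :=
        hμ _ _ (isCrWith_coeval St r a n i) hderiv
    _ ≤ K * (St.q ^ n) ^ r := by
        gcongr
        exact CrNorm_coeval_le St hr a n i
    _ = K * St.q ^ ((n : ℝ) * r) := by rw [Real.rpow_natCast_mul St.q_pos.le]

end

/-- if `μ` is a continuous linear form on `C^r(O, J', (d_σ)_{σ∈S∖J'})`, then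
there is `C_μ ≥ 0` with `|∫_{a+ϖ^n O} ((z−a)/ϖ^n)^i μ(z)| ≤ C_μ q^{nr}` for all `a`, `n` and
all `i ∈ Y'`. -/
theorem statement17 (St : Setting S O E) (J : Set S) (d : S → ℕ)
    (r : ℝ) (hr : 0 ≤ r) (μ : (O → E) →ₗ[E] E)
    (hcont : ∃ K : ℝ, 0 ≤ K ∧ ∀ (f : O → E) (D : (S → ℕ) → O → E),
      IsCrWith St r f D → (∀ s ∉ Jp J d r, D (Pi.single s (d s + 1)) = 0) →
      ‖μ f‖ ≤ K * CrNorm St r f D) :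
    ∃ C : ℝ, 0 ≤ C ∧ ∀ (a : O) (n : ℕ) (i : S → ℕ),
      (∀ s ∉ Jp J d r, i s ≤ d s) →
      ‖μ (coeval St a n i)‖ ≤ C * St.q ^ ((n : ℝ) * r) := by
  obtain ⟨K, hK, hμ⟩ := hcont
  exact ⟨K, hK, fun a n _ hi => statement17_general St J d hr μ hK hμ a n hi⟩

end CrPaper
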